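/- arXiv:2103.02321 — 2 statements merged into one kernel-verified Lean document; each statement's English description precedes it below -/
import Mathlib

section
/- (LU factorization for the Christoffel transformation.) Let u be quasi-definite with SMOP (P_n), Jacobi matrix J and recurrence coefficients (a_n, b_n), let c ∈ ℂ with P_n(c) ≠ 0 for all n, and suppose the Christoffel transformation ũ = (x−c)u is quasi-definite with Jacobi matrix J̃. Define L as the unit lower bidiagonal matrix with subdiagonal entries ℓ_n = −(P_{n−1}(c)/P_n(c))·(⟨u,P_n²⟩/⟨u,P_{n−1}²⟩), and U as the upper bidiagonal matrix with diagonal β_n = −P_{n+1}(c)/P_n(c) and superdiagonal entries 1. Then, entrywise, J − cI = L·U and J̃ − cI = U·L. -/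
open Polynomial

noncomputable section

/-- Apply a linear functional (identified with its moment sequence) to a polynomial:
`⟨u, p⟩ = Σ_k c_k u_k` for `p = Σ_k c_k x^k`. -/
def fapply (u : ℕ → ℂ) (p : Polynomial ℂ) : ℂ := p.sum fun k ck => ck * u k

/-- `P` is the sequence of monic orthogonal polynomials (SMOP) of the functional `u`. -/
def IsSMOP (u : ℕ → ℂ) (P : ℕ → Polynomial ℂ) : Prop :=
  (∀ n, (P n).Monic) ∧ (∀ n, (P n).natDegree = n) ∧
    (∀ n m, n ≠ m → fapply u (P n * P m) = 0) ∧ (∀ n, fapply u (P n * P n) ≠ 0)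

/-- A functional is quasi-definite iff it admits a SMOP. -/
def IsQuasiDefinite (u : ℕ → ℂ) : Prop := ∃ P, IsSMOP u P

/-- Three term recurrence relation `x P_n = P_{n+1} + b_n P_n + a_n P_{n-1}`,
with `P_{-1} = 0`, `P_0 = 1`. -/
def HasTTRR (P : ℕ → Polynomial ℂ) (a b : ℕ → ℂ) : Prop :=
  P 0 = 1 ∧ X * P 0 = P 1 + C (b 0) * P 0 ∧
    ∀ n, 1 ≤ n → X * P n = P (n + 1) + C (b n) * P n + C (a n) * P (n - 1)

/-- Wronskian `W(p,q)(x) = p(x) q'(x) - p'(x) q(x)`. -/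
def Wr (p q : Polynomial ℂ) (x : ℂ) : ℂ :=
  p.eval x * (derivative q).eval x - (derivative p).eval x * q.eval x

/-- The monic Jacobi matrix with diagonal `b`, superdiagonal `1` and subdiagonal
entries `J_{n+1,n} = a_{n+1}`. -/
def jacobi (a b : ℕ → ℂ) (i j : ℕ) : ℂ :=
  if i = j then b i else if j = i + 1 then 1 else if i = j + 1 then a i else 0

/-- Entrywise product of semi-infinite (banded) matrices; the sum has finite support. -/
def mprod (A B : ℕ → ℕ → ℂ) (i j : ℕ) : ℂ := ∑' k, A i k * B k j

/-- `w` is the moment sequence of the inverse functional `u⁻¹`: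
the convolution of the moments of `u` and `w` is `(1,0,0,…)`. -/
def IsInverseMoments (u w : ℕ → ℂ) : Prop :=
  ∀ n, ∑ k ∈ Finset.range (n + 1), u k * w (n - k) = if n = 0 then 1 else 0

/-- Apply a functional `u` to the second (outer) variable `y` of a bivariate polynomial
`D = Σ_k q_k(x) y^k`, giving `Σ_k u_k q_k(x)`. -/
def fapplyY (u : ℕ → ℂ) (D : Polynomial (Polynomial ℂ)) : Polynomial ℂ :=
  D.sum fun k q => u k • q

/-!
Write `K n = ⟨u, P_n²⟩`. Orthogonality alone connects the two families: `P_n` is monic and, with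
respect to `ũ = (x - c)u`, orthogonal to all polynomials of degree `< n - 1`, while `(x - c) P̃_n`
is orthogonal to all polynomials of degree `< n` with respect to `u`. Hence
`P_{n+1} = P̃_{n+1} + ℓ_{n+1} P̃_n` and `(x - c) P̃_n = P_{n+1} + β_n P_n`; that is, `P = L P̃` and
`(x - c) P̃ = U P` for the columns `P`, `P̃`. The value `β_n` comes from evaluating at `c`, and then
`ℓ_{n+1} = K (n + 1) / ⟨ũ, P̃_n²⟩` with `⟨ũ, P̃_n²⟩ = β_n K n`. Substituting one relation into the
other gives `(x - c) P = L U P` and `(x - c) P̃ = U L P̃`, which are three-term recurrences, and a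
monic sequence determines the coefficients of its three-term recurrence.
-/

/-- The linear functional `fapply u` bundled as a linear map. -/
def fapplyLinear (u : ℕ → ℂ) : ℂ[X] →ₗ[ℂ] ℂ := lsum fun k => LinearMap.mulRight ℂ (u k)

theorem fapply_add (u : ℕ → ℂ) (p q : ℂ[X]) : fapply u (p + q) = fapply u p + fapply u q :=
  map_add (fapplyLinear u) p q

theorem fapply_sub (u : ℕ → ℂ) (p q : ℂ[X]) : fapply u (p - q) = fapply u p - fapply u q :=
  map_sub (fapplyLinear u) p q

theorem fapply_C_mul (u : ℕ → ℂ) (r : ℂ) (p : ℂ[X]) : fapply u (C r * p) = r * fapply u p := by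
  rw [← smul_eq_C_mul]
  exact map_smul (fapplyLinear u) r p

theorem fapply_monomial (u : ℕ → ℂ) (n : ℕ) (r : ℂ) : fapply u (monomial n r) = r * u n :=
  sum_monomial_index r _ (zero_mul _)

section MonicSequence

variable {P : ℕ → ℂ[X]} {a a' b b' : ℕ → ℂ}

theorem coeff_self_of_monic (hmonic : ∀ n, (P n).Monic) (hdeg : ∀ n, (P n).natDegree = n)
    (n : ℕ) : (P n).coeff n = 1 := by
  simpa only [hdeg n] using (hmonic n).coeff_natDegree

theorem HasTTRR.diag_eq_coeff (hmonic : ∀ n, (P n).Monic) (hdeg : ∀ n, (P n).natDegree = n)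
    (h : HasTTRR P a b) (n : ℕ) : b n = (X * P n - P (n + 1)).coeff n := by
  have hself := coeff_self_of_monic hmonic hdeg
  cases n with
  | zero => simp [h.2.1, hself]
  | succ n =>
    have hlower : (P n).coeff (n + 1) = 0 := coeff_eq_zero_of_natDegree_lt (by simp [hdeg])
    simp [h.2.2 (n + 1) n.succ_pos, add_assoc, hself, hlower]

theorem HasTTRR.subdiag_eq_coeff (hmonic : ∀ n, (P n).Monic) (hdeg : ∀ n, (P n).natDegree = n)
    (h : HasTTRR P a b) (n : ℕ) :
    a (n + 1) = (X * P (n + 1) - P (n + 2) - C (b (n + 1)) * P (n + 1)).coeff n := by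
  simp [h.2.2 (n + 1) n.succ_pos, add_assoc, coeff_self_of_monic hmonic hdeg]

theorem HasTTRR.jacobi_eq (hmonic : ∀ n, (P n).Monic) (hdeg : ∀ n, (P n).natDegree = n)
    (h : HasTTRR P a b) (h' : HasTTRR P a' b') : jacobi a b = jacobi a' b' := by
  have hb : b = b' := funext fun n => by
    rw [h.diag_eq_coeff hmonic hdeg, h'.diag_eq_coeff hmonic hdeg]
  subst hb
  have ha (n : ℕ) : a (n + 1) = a' (n + 1) := by
    rw [h.subdiag_eq_coeff hmonic hdeg, h'.subdiag_eq_coeff hmonic hdeg]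
  funext i j
  rcases eq_or_ne i (j + 1) with rfl | hij
  · simp [jacobi, ha]
  · simp [jacobi, hij]

end MonicSequence

namespace IsSMOP

variable {u : ℕ → ℂ} {P : ℕ → ℂ[X]}

theorem monic (h : IsSMOP u P) (n : ℕ) : (P n).Monic := h.1 n

theorem natDegree_eq (h : IsSMOP u P) (n : ℕ) : (P n).natDegree = n := h.2.1 n

theorem degree_eq (h : IsSMOP u P) (n : ℕ) : (P n).degree = n := by
  rw [degree_eq_natDegree (h.monic n).ne_zero, h.natDegree_eq]

theorem fapply_mul_self_ne_zero (h : IsSMOP u P) (n : ℕ) : fapply u (P n * P n) ≠ 0 := h.2.2.2 n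

theorem coeff_self (h : IsSMOP u P) (n : ℕ) : (P n).coeff n = 1 :=
  coeff_self_of_monic h.monic h.natDegree_eq n

theorem fapply_mul_eq_zero_of_degree_lt (h : IsSMOP u P) {n : ℕ} {q : ℂ[X]} (hq : q.degree < n) :
    fapply u (P n * q) = 0 := by
  let S : Sequence ℂ := ⟨P, h.degree_eq⟩
  have hspan : q ∈ Submodule.span ℂ (S '' Set.Iio n) := by
    rw [S.span_degreeLT fun i _ => by simp [S, (h.monic i).leadingCoeff]]
    exact mem_degreeLT.mpr hq
  have hker : Submodule.span ℂ (S '' Set.Iio n) ≤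
      LinearMap.ker (fapplyLinear u ∘ₗ LinearMap.mulLeft ℂ (P n)) := by
    rw [Submodule.span_le]
    rintro _ ⟨k, hk, rfl⟩
    exact h.2.2.1 n k (Set.mem_Iio.mp hk).ne'
  exact hker hspan

theorem degree_sub_C_coeff_mul_lt (h : IsSMOP u P) {n : ℕ} {q : ℂ[X]} (hq : q.degree ≤ n) :
    (q - C (q.coeff n) * P n).degree < n := by
  rw [degree_lt_iff_coeff_zero]
  intro k hk
  rcases hk.eq_or_lt with rfl | hk
  · simp [h.coeff_self]
  · have hqk : q.coeff k = 0 := coeff_eq_zero_of_degree_lt (hq.trans_lt (Nat.cast_lt.mpr hk))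
    have hPk : (P n).coeff k = 0 := coeff_eq_zero_of_natDegree_lt (by rwa [h.natDegree_eq])
    simp [hqk, hPk]

theorem fapply_mul_of_degree_le (h : IsSMOP u P) {n : ℕ} {q : ℂ[X]} (hq : q.degree ≤ n) :
    fapply u (P n * q) = q.coeff n * fapply u (P n * P n) := by
  have hlower := h.fapply_mul_eq_zero_of_degree_lt (h.degree_sub_C_coeff_mul_lt hq)
  rw [mul_sub, mul_left_comm, fapply_sub, fapply_C_mul] at hlower
  exact sub_eq_zero.mp hlower

theorem eq_zero_of_orthogonal (h : IsSMOP u P) {n : ℕ} {p : ℂ[X]} (hp : p.degree < n)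
    (horth : ∀ q : ℂ[X], q.degree < n → fapply u (p * q) = 0) : p = 0 := by
  by_contra hp0
  have hPdeg : (P p.natDegree).degree < n := by
    rwa [h.degree_eq, ← degree_eq_natDegree hp0]
  have hlead := h.fapply_mul_of_degree_le (q := p) degree_le_natDegree
  rw [mul_comm, horth _ hPdeg] at hlead
  exact mul_ne_zero (leadingCoeff_ne_zero.mpr hp0) (h.fapply_mul_self_ne_zero _) hlead.symm

theorem eq_C_coeff_mul_of_orthogonal (h : IsSMOP u P) {n : ℕ} {p : ℂ[X]} (hp : p.degree ≤ n)
    (horth : ∀ q : ℂ[X], q.degree < n → fapply u (p * q) = 0) : p = C (p.coeff n) * P n := by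
  refine sub_eq_zero.mp (h.eq_zero_of_orthogonal (h.degree_sub_C_coeff_mul_lt hp) fun q hq => ?_)
  rw [sub_mul, mul_assoc, fapply_sub, fapply_C_mul, horth q hq,
    h.fapply_mul_eq_zero_of_degree_lt hq, mul_zero, sub_zero]

end IsSMOP

section Christoffel

/-- Moments of the canonical Christoffel transformation `(x - c)u`. -/
def christoffel (c : ℂ) (u : ℕ → ℂ) (n : ℕ) : ℂ := u (n + 1) - c * u n

/-- The diagonal entries `β_n` of the upper factor `U`. -/
def christoffelDiag (P : ℕ → ℂ[X]) (c : ℂ) (n : ℕ) : ℂ :=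
  -((P (n + 1)).eval c / (P n).eval c)

/-- The subdiagonal entries `ℓ_n` of the lower factor `L`. The matrix has no entry `ℓ_0`; its
value `0` makes `β_n + ℓ_n` the `n`-th diagonal entry of `L U` for `n = 0` too. -/
def christoffelSubdiag (u : ℕ → ℂ) (P : ℕ → ℂ[X]) (c : ℂ) : ℕ → ℂ
  | 0 => 0
  | n + 1 => -((P n).eval c / (P (n + 1)).eval c) *
      (fapply u (P (n + 1) * P (n + 1)) / fapply u (P n * P n))

theorem fapply_christoffel (c : ℂ) (u : ℕ → ℂ) (p : ℂ[X]) :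
    fapply (christoffel c u) p = fapply u ((X - C c) * p) := by
  induction p using Polynomial.induction_on' with
  | add p q hp hq => rw [mul_add, fapply_add, fapply_add, hp, hq]
  | monomial n r =>
    rw [sub_mul, fapply_sub, fapply_C_mul, X_mul_monomial]
    simp only [fapply_monomial, christoffel]
    ring

namespace IsSMOP

variable {u : ℕ → ℂ} {c : ℂ} {P Q : ℕ → ℂ[X]}

theorem X_sub_C_mul_christoffel (h : IsSMOP u P) (hQ : IsSMOP (christoffel c u) Q) {n : ℕ}
    (hc : (P n).eval c ≠ 0) :
    (X - C c) * Q n = P (n + 1) + C (christoffelDiag P c n) * P n := by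
  set β := christoffelDiag P c n with hβ
  have hroot : (P (n + 1) + C β * P n).IsRoot c := by
    simp [hβ, christoffelDiag, hc]
  obtain ⟨R, hR⟩ := dvd_iff_isRoot.mpr hroot
  have hlt : (C β * P n).degree < (P (n + 1)).degree := by
    rw [← smul_eq_C_mul]
    refine (degree_smul_le β (P n)).trans_lt ?_
    rw [h.degree_eq, h.degree_eq]
    exact Nat.cast_lt.mpr n.lt_succ_self
  have hRmonic : R.Monic :=
    (monic_X_sub_C c).of_mul_monic_left (hR ▸ (h.monic (n + 1)).add_of_left hlt)
  have hRdeg : R.natDegree = n := by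
    have hdeg := natDegree_eq_of_degree_eq (degree_add_eq_left_of_degree_lt hlt)
    rw [hR, (monic_X_sub_C c).natDegree_mul hRmonic, natDegree_X_sub_C, h.natDegree_eq] at hdeg
    omega
  have hRorth (q : ℂ[X]) (hq : q.degree < n) : fapply (christoffel c u) (R * q) = 0 := by
    rw [fapply_christoffel, ← mul_assoc, ← hR, add_mul, mul_assoc, fapply_add, fapply_C_mul,
      h.fapply_mul_eq_zero_of_degree_lt hq,
      h.fapply_mul_eq_zero_of_degree_lt (hq.trans (Nat.cast_lt.mpr n.lt_succ_self)),
      mul_zero, add_zero]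
  have hRQ := hQ.eq_C_coeff_mul_of_orthogonal (natDegree_le_iff_degree_le.mp hRdeg.le) hRorth
  have hRcoeff : R.coeff n = 1 := by simpa only [hRdeg] using hRmonic.coeff_natDegree
  rw [hR, hRQ, hRcoeff, C_1, one_mul]

theorem fapply_christoffel_mul_self (h : IsSMOP u P) (hQ : IsSMOP (christoffel c u) Q) {n : ℕ}
    (hc : (P n).eval c ≠ 0) :
    fapply (christoffel c u) (Q n * Q n) = christoffelDiag P c n * fapply u (P n * P n) := by
  have hlt : (Q n).degree < (n + 1 : ℕ) := by
    rw [hQ.degree_eq]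
    exact Nat.cast_lt.mpr n.lt_succ_self
  rw [fapply_christoffel, ← mul_assoc, h.X_sub_C_mul_christoffel hQ hc, add_mul, mul_assoc,
    fapply_add, fapply_C_mul, h.fapply_mul_eq_zero_of_degree_lt hlt,
    h.fapply_mul_of_degree_le (hQ.degree_eq n).le, hQ.coeff_self, zero_add, one_mul]

theorem fapply_christoffel_succ_mul (h : IsSMOP u P) (c : ℂ) {n : ℕ} {q : ℂ[X]}
    (hq : q.degree ≤ n) :
    fapply (christoffel c u) (P (n + 1) * q) = q.coeff n * fapply u (P (n + 1) * P (n + 1)) := by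
  have hdeg : ((X - C c) * q).degree ≤ ((n + 1 : ℕ) : WithBot ℕ) := by
    rw [degree_mul, degree_X_sub_C, add_comm]
    exact add_le_add_left hq 1
  have hqsucc : q.coeff (n + 1) = 0 :=
    coeff_eq_zero_of_degree_lt (hq.trans_lt (Nat.cast_lt.mpr n.lt_succ_self))
  rw [fapply_christoffel, mul_left_comm, h.fapply_mul_of_degree_le hdeg, sub_mul, coeff_sub,
    coeff_X_mul, coeff_C_mul, hqsucc, mul_zero, sub_zero]

theorem eq_add_christoffel (h : IsSMOP u P) (hQ : IsSMOP (christoffel c u) Q) {n : ℕ}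
    (hc : (P n).eval c ≠ 0) (hc' : (P (n + 1)).eval c ≠ 0) :
    P (n + 1) = Q (n + 1) + C (christoffelSubdiag u P c (n + 1)) * Q n := by
  set D := P (n + 1) - Q (n + 1) with hD
  have hDdeg : D.degree ≤ n := by
    have hlt : D.degree < (P (n + 1)).degree := degree_sub_lt_left
      (by rw [h.degree_eq, hQ.degree_eq]) (h.monic _).ne_zero ((h.monic _).trans (hQ.monic _).symm)
    rw [h.degree_eq] at hlt
    exact Order.le_of_lt_succ hlt
  have hDmul {q : ℂ[X]} (hq : q.degree ≤ n) :
      fapply (christoffel c u) (D * q) = q.coeff n * fapply u (P (n + 1) * P (n + 1)) := by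
    rw [hD, sub_mul, fapply_sub, h.fapply_christoffel_succ_mul c hq,
      hQ.fapply_mul_eq_zero_of_degree_lt (hq.trans_lt (Nat.cast_lt.mpr n.lt_succ_self)), sub_zero]
  have hDorth (q : ℂ[X]) (hq : q.degree < n) : fapply (christoffel c u) (D * q) = 0 := by
    rw [hDmul hq.le, coeff_eq_zero_of_degree_lt hq, zero_mul]
  have hcoeff : D.coeff n = christoffelSubdiag u P c (n + 1) := by
    have hlead := hQ.fapply_mul_of_degree_le hDdeg
    rw [mul_comm, hDmul (hQ.degree_eq n).le, hQ.coeff_self, one_mul,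
      h.fapply_christoffel_mul_self hQ hc] at hlead
    have hK := h.fapply_mul_self_ne_zero n
    rw [christoffelSubdiag, hlead, christoffelDiag]
    field_simp
  rw [← hcoeff, ← hQ.eq_C_coeff_mul_of_orthogonal hDdeg hDorth, hD, add_sub_cancel]

end IsSMOP

end Christoffel

section Bidiagonal

/-- The semi-infinite lower bidiagonal matrix `L` with unit diagonal and subdiagonal entries
`L_{n+1,n} = ℓ (n + 1)`; the value `ℓ 0` is not an entry. -/
def unitLowerBidiagonal (ℓ : ℕ → ℂ) (i j : ℕ) : ℂ :=
  if i = j then 1 else if i = j + 1 then ℓ i else 0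

/-- The semi-infinite upper bidiagonal matrix `U` with diagonal `β` and superdiagonal entries
`1`. -/
def unitUpperBidiagonal (β : ℕ → ℂ) (i j : ℕ) : ℂ :=
  if j = i then β i else if j = i + 1 then 1 else 0

theorem jacobi_add_const_sub (a b : ℕ → ℂ) (c : ℂ) (i j : ℕ) :
    jacobi a (fun n => b n + c) i j - (if i = j then c else 0) = jacobi a b i j := by
  unfold jacobi
  split_ifs <;> simp

theorem mprod_unitUpperBidiagonal (β : ℕ → ℂ) (B : ℕ → ℕ → ℂ) (i j : ℕ) :
    mprod (unitUpperBidiagonal β) B i j = β i * B i j + B (i + 1) j := by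
  unfold mprod
  rw [tsum_eq_sum (s := {i, i + 1}), Finset.sum_pair (by simp)]
  · simp [unitUpperBidiagonal]
  · intro k hk
    simp only [Finset.mem_insert, Finset.mem_singleton, not_or] at hk
    simp [unitUpperBidiagonal, hk]

theorem mprod_unitLowerBidiagonal_zero (ℓ : ℕ → ℂ) (B : ℕ → ℕ → ℂ) (j : ℕ) :
    mprod (unitLowerBidiagonal ℓ) B 0 j = B 0 j := by
  unfold mprod
  rw [tsum_eq_single 0]
  · simp [unitLowerBidiagonal]
  · intro k hk
    simp [unitLowerBidiagonal, hk.symm]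

theorem mprod_unitLowerBidiagonal_succ (ℓ : ℕ → ℂ) (B : ℕ → ℕ → ℂ) (i j : ℕ) :
    mprod (unitLowerBidiagonal ℓ) B (i + 1) j = B (i + 1) j + ℓ (i + 1) * B i j := by
  unfold mprod
  rw [tsum_eq_sum (s := {i + 1, i}), Finset.sum_pair (by simp)]
  · simp [unitLowerBidiagonal]
  · intro k hk
    simp only [Finset.mem_insert, Finset.mem_singleton, not_or] at hk
    simp [unitLowerBidiagonal, Ne.symm hk.1, Ne.symm hk.2]

theorem mprod_unitUpperBidiagonal_unitLowerBidiagonal (β ℓ : ℕ → ℂ) :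
    mprod (unitUpperBidiagonal β) (unitLowerBidiagonal ℓ) =
      jacobi (fun n => β n * ℓ n) (fun n => β n + ℓ (n + 1)) := by
  funext i j
  rw [mprod_unitUpperBidiagonal]
  unfold unitLowerBidiagonal jacobi
  grind

theorem mprod_unitLowerBidiagonal_unitUpperBidiagonal (β : ℕ → ℂ) {ℓ : ℕ → ℂ} (hℓ : ℓ 0 = 0) :
    mprod (unitLowerBidiagonal ℓ) (unitUpperBidiagonal β) =
      jacobi (fun n => ℓ n * β (n - 1)) (fun n => β n + ℓ n) := by
  funext i j
  cases i with
  | zero =>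
    rw [mprod_unitLowerBidiagonal_zero]
    unfold unitUpperBidiagonal jacobi
    grind
  | succ i =>
    rw [mprod_unitLowerBidiagonal_succ]
    unfold unitUpperBidiagonal jacobi
    grind

end Bidiagonal

section Darboux

variable {P Q : ℕ → ℂ[X]} {β ℓ : ℕ → ℂ} {c : ℂ}

theorem hasTTRR_left_of_bidiagonal (hP0 : P 0 = 1) (hQ0 : Q 0 = 1) (hℓ : ℓ 0 = 0)
    (hPQ : ∀ n, P (n + 1) = Q (n + 1) + C (ℓ (n + 1)) * Q n)
    (hQP : ∀ n, (X - C c) * Q n = P (n + 1) + C (β n) * P n) :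
    HasTTRR P (fun n => ℓ n * β (n - 1)) (fun n => β n + ℓ n + c) := by
  refine ⟨hP0, ?_, fun n hn => ?_⟩
  · have h0 := hQP 0
    rw [hQ0, hP0] at h0
    simp only [hP0, hℓ, C_add, C_0]
    linear_combination h0
  · obtain ⟨n, rfl⟩ := Nat.exists_eq_add_of_le' hn
    simp only [Nat.add_sub_cancel, C_add, C_mul]
    linear_combination (X - C c) * hPQ n + hQP (n + 1) + C (ℓ (n + 1)) * hQP n

theorem hasTTRR_right_of_bidiagonal (hP0 : P 0 = 1) (hQ0 : Q 0 = 1)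
    (hPQ : ∀ n, P (n + 1) = Q (n + 1) + C (ℓ (n + 1)) * Q n)
    (hQP : ∀ n, (X - C c) * Q n = P (n + 1) + C (β n) * P n) :
    HasTTRR Q (fun n => β n * ℓ n) (fun n => β n + ℓ (n + 1) + c) := by
  refine ⟨hQ0, ?_, fun n hn => ?_⟩
  · have h0 := hQP 0
    rw [hQ0, hP0] at h0
    simp only [hQ0, C_add]
    linear_combination h0 + hPQ 0 + C (ℓ 1) * hQ0
  · obtain ⟨n, rfl⟩ := Nat.exists_eq_add_of_le' hn
    simp only [Nat.add_sub_cancel, C_add, C_mul]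
    linear_combination hQP (n + 1) + hPQ (n + 1) + C (β (n + 1)) * hPQ n

end Darboux

/-- LU factorization for the Christoffel transformation `ũ = (x-c)u`:
`J - cI = L·U` and `J̃ - cI = U·L`. -/
theorem stmt_10 (u : ℕ → ℂ) (c : ℂ) (P : ℕ → Polynomial ℂ) (hP : IsSMOP u P)
    (a b : ℕ → ℂ) (hrec : HasTTRR P a b) (ha : ∀ n, 1 ≤ n → a n ≠ 0)
    (hc : ∀ n, (P n).eval c ≠ 0)
    (ut : ℕ → ℂ) (hut : ∀ n, ut n = u (n + 1) - c * u n)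
    (Pt : ℕ → Polynomial ℂ) (hPt : IsSMOP ut Pt)
    (at_ bt : ℕ → ℂ) (hrect : HasTTRR Pt at_ bt)
    (ell : ℕ → ℂ)
    (hell : ∀ n, 1 ≤ n → ell n = -((P (n - 1)).eval c / (P n).eval c)
        * (fapply u (P n * P n) / fapply u (P (n - 1) * P (n - 1))))
    (L U : ℕ → ℕ → ℂ)
    (hL : ∀ i j, L i j = if i = j then 1 else if i = j + 1 then ell i else 0)
    (hU : ∀ i j, U i j =
      if j = i then -((P (i + 1)).eval c / (P i).eval c) else if j = i + 1 then 1 else 0) :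
    (∀ i j, (jacobi a b i j - if i = j then c else 0) = mprod L U i j)
    ∧ (∀ i j, (jacobi at_ bt i j - if i = j then c else 0) = mprod U L i j) := by
  obtain rfl : ut = christoffel c u := funext hut
  have hLℓ : L = unitLowerBidiagonal (christoffelSubdiag u P c) := by
    funext i j
    rw [hL, unitLowerBidiagonal]
    split_ifs with hdiag hsub
    · rfl
    · rw [hsub]
      exact hell (j + 1) j.succ_pos
    · rfl
  have hUβ : U = unitUpperBidiagonal (christoffelDiag P c) := funext₂ hU
  have hPPt n := hP.eq_add_christoffel hPt (hc n) (hc (n + 1))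
  have hPtP n := hP.X_sub_C_mul_christoffel hPt (hc n)
  have hJ := hrec.jacobi_eq hP.monic hP.natDegree_eq
    (hasTTRR_left_of_bidiagonal hrec.1 hrect.1 rfl hPPt hPtP)
  have hJt := hrect.jacobi_eq hPt.monic hPt.natDegree_eq
    (hasTTRR_right_of_bidiagonal hrec.1 hrect.1 hPPt hPtP)
  rw [hLℓ, hUβ, mprod_unitLowerBidiagonal_unitUpperBidiagonal _ rfl,
    mprod_unitUpperBidiagonal_unitLowerBidiagonal, hJ, hJt]
  exact ⟨jacobi_add_const_sub _ _ c, jacobi_add_const_sub _ _ c⟩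
end
end

section
/- Let u be quasi-definite with SMOP (P_n), let c ∈ ℂ with P_n(c) ≠ 0 for all n, and suppose the Christoffel transformation ũ = (x−c)u is quasi-definite with SMOP (P̃_n). Let P^{(1)}_{n−1}(x) = (1/u_0)⟨u_y,(P_n(x)−P_n(y))/(x−y)⟩ and P̃^{(1)}_{n−1}(x) = (1/ũ_0)⟨ũ_y,(P̃_n(x)−P̃_n(y))/(x−y)⟩ be the associated polynomials of the first kind of u and ũ, and define R_n(x) = (u_0/ũ_0)·[(x−c)·P^{(1)}_n(x) − P_{n+1}(x)]. Then for every n ≥ 1: (x−c)·P̃^{(1)}_{n−1}(x) = R_n(x) − (P_{n+1}(c)/P_n(c))·R_{n−1}(x). -/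
open Polynomial

noncomputable section

/-!
If `(x - c) q = p`, then dividing `(x - c) q(x) - (y - c) q(y) = p(x) - p(y)` by `x - y` gives the
Leibniz rule `Δp = (y - c) Δq + q(x)` for divided differences. Applying `u` in `y` turns
`(y - c) Δq` into `⟨ũ_y, Δq⟩`, so `(x - c) ⟨ũ_y, Δq⟩ = (x - c) ⟨u_y, Δp⟩ - u₀ p`, whose right-hand
side is linear in `p`. The theorem is the case `q = P̃_n`, where `p = P_{n+1} - λ P_n` with
`λ = P_{n+1}(c) / P_n(c)`: the difference `(x - c) P̃_n - P_{n+1}` has degree at most `n` and is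
`u`-orthogonal to all polynomials of degree less than `n`, hence is a multiple of `P_n`, and
evaluation at `c` identifies the factor.
-/

section MomentFunctional

variable {R : Type*} [CommRing R] (B : Type*) [CommRing B] [Algebra R B]

/-- The functional with moment sequence `u`, extended to polynomials with coefficients in an
`R`-algebra `B`. With `B = R` this is the functional itself; with `B = R[X]` it acts on the outer
variable `y` of a polynomial in `x` and `y`. -/
def momentFunctional (u : ℕ → R) : B[X] →ₗ[B] B :=
  lsum fun k => u k • LinearMap.id

variable {B}

theorem momentFunctional_apply (u : ℕ → R) (p : B[X]) :
    momentFunctional B u p = p.sum fun k b => u k • b :=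
  rfl

theorem momentFunctional_monomial (u : ℕ → R) (n : ℕ) (b : B) :
    momentFunctional B u (monomial n b) = u n • b :=
  sum_monomial_index b (fun k b => u k • b) (smul_zero (u n))

theorem momentFunctional_C_mul (u : ℕ → R) (b : B) (p : B[X]) :
    momentFunctional B u (C b * p) = b * momentFunctional B u p := by
  rw [C_mul', map_smul, smul_eq_mul]

theorem momentFunctional_C (u : ℕ → R) (b : B) : momentFunctional B u (C b) = u 0 • b :=
  momentFunctional_monomial u 0 b

theorem momentFunctional_christoffel {u ut : ℕ → R} {c : R}
    (hut : ∀ n, ut n = u (n + 1) - c * u n) (p : B[X]) :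
    momentFunctional B ut p = momentFunctional B u ((X - C (algebraMap R B c)) * p) := by
  induction p using Polynomial.induction_on' with
  | add p q hp hq => rw [mul_add, map_add, map_add, hp, hq]
  | monomial n b =>
    rw [sub_mul, X_mul_monomial, C_mul_monomial, map_sub, momentFunctional_monomial,
      momentFunctional_monomial, momentFunctional_monomial, hut, sub_smul, mul_comm c, mul_smul,
      Algebra.smul_def c]

end MomentFunctional

section DividedDifference

variable {R : Type*} [CommRing R]

/-- `D(x, y) = (p(x) - p(y)) / (x - y)`, with the division cleared. As in `fapplyY`, the outer
variable of `R[X][X]` is `y`, so that `x` is `C X` and `p(x)` is `C p`. -/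
def IsDividedDifference (p : R[X]) (D : R[X][X]) : Prop :=
  (C X - X) * D = C p - p.map C

namespace IsDividedDifference

variable {p q : R[X]} {D E : R[X][X]}

theorem sub (hD : IsDividedDifference p D) (hE : IsDividedDifference q E) :
    IsDividedDifference (p - q) (D - E) := by
  unfold IsDividedDifference at *
  rw [C_sub, Polynomial.map_sub]
  linear_combination hD - hE

theorem C_mul (a : R) (hD : IsDividedDifference p D) :
    IsDividedDifference (C a * p) (C (C a) * D) := by
  unfold IsDividedDifference at *
  rw [Polynomial.C_mul, Polynomial.map_mul, map_C]
  linear_combination C (C a) * hD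

theorem X_sub_C_mul (c : R) (hE : IsDividedDifference q E) :
    IsDividedDifference ((X - C c) * q) ((X - C (C c)) * E + C q) := by
  unfold IsDividedDifference at *
  rw [Polynomial.C_mul, C_sub, Polynomial.map_mul, Polynomial.map_sub, map_X, map_C]
  linear_combination (X - C (C c)) * hE

theorem unique (hD : IsDividedDifference p D) (hE : IsDividedDifference p E) : D = E := by
  have h : (X - C X) * D = (X - C X) * E := by
    unfold IsDividedDifference at hD hE
    linear_combination hE - hD
  exact (monic_X_sub_C (X : R[X])).isRegular.left h

theorem X_sub_C_mul_momentFunctional {u ut : ℕ → R} {c : R}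
    (hut : ∀ n, ut n = u (n + 1) - c * u n) (hE : IsDividedDifference q E)
    (hD : IsDividedDifference p D) (hqp : (X - C c) * q = p) :
    (X - C c) * momentFunctional R[X] ut E =
      (X - C c) * momentFunctional R[X] u D - u 0 • p := by
  subst hqp
  rw [hD.unique (hE.X_sub_C_mul c), map_add, momentFunctional_C, momentFunctional_christoffel hut,
    mul_add, mul_smul_comm, algebraMap_eq, add_sub_cancel_right]

end IsDividedDifference

end DividedDifference

section Orthogonality

variable {R : Type*} [CommRing R]

theorem degree_sub_C_coeff_mul_lt {p q : R[X]} {n : ℕ} (hp : p.degree < (n + 1 : ℕ))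
    (hq : IsMonicOfDegree q n) : (p - C (p.coeff n) * q).degree < n := by
  rw [degree_lt_iff_coeff_zero] at hp ⊢
  intro m hm
  rw [coeff_sub, coeff_C_mul]
  obtain rfl | hlt := hm.eq_or_lt
  · have : q.coeff n = 1 := by rw [← hq.leadingCoeff_eq, leadingCoeff, hq.natDegree_eq]
    rw [this, mul_one, sub_self]
  · rw [hp m hlt, coeff_eq_zero_of_natDegree_lt (hq.natDegree_eq.trans_lt hlt), mul_zero, sub_zero]

theorem apply_mul_eq_mul_apply_mul_add (L : R[X] →ₗ[R] R) (a : R) (p q r : R[X]) :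
    L (p * q) = a * L (p * r) + L (p * (q - C a * r)) := by
  have : p * q = a • (p * r) + p * (q - C a * r) := by
    rw [smul_eq_C_mul]
    ring
  rw [this, map_add, map_smul, smul_eq_mul]

/-- `P` is the sequence of monic orthogonal polynomials of the linear functional `L`, which is
thereby quasi-definite: the SMOP of `L`, over an arbitrary coefficient ring. -/
structure IsMonicOrthogonal (L : R[X] →ₗ[R] R) (P : ℕ → R[X]) : Prop where
  isMonicOfDegree (n : ℕ) : IsMonicOfDegree (P n) n
  orthogonal : Pairwise fun n m => L (P n * P m) = 0
  apply_mul_self_ne_zero (n : ℕ) : L (P n * P n) ≠ 0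

theorem IsSMOP.isMonicOrthogonal {u : ℕ → ℂ} {P : ℕ → ℂ[X]} (h : IsSMOP u P) :
    IsMonicOrthogonal (momentFunctional ℂ u) P := by
  have fapply_eq : fapply u = momentFunctional ℂ u := by
    funext p
    simp only [fapply, momentFunctional_apply, smul_eq_mul, mul_comm]
  obtain ⟨monic, natDegree_eq, orthogonal, ne_zero⟩ := h
  rw [fapply_eq] at orthogonal ne_zero
  exact ⟨fun n => ⟨natDegree_eq n, monic n⟩, orthogonal, ne_zero⟩

namespace IsMonicOrthogonal

variable {L : R[X] →ₗ[R] R} {P : ℕ → R[X]}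

theorem apply_mul_eq_zero_of_degree_lt (hP : IsMonicOrthogonal L P) {n : ℕ} {q : R[X]}
    (hq : q.degree < n) : L (P n * q) = 0 := by
  suffices H : ∀ k ≤ n, ∀ q : R[X], q.degree < k → L (P n * q) = 0 from H n le_rfl q hq
  intro k
  induction k with
  | zero =>
    intro _ q hq
    rw [degree_eq_bot.mp (Nat.WithBot.lt_zero_iff.mp hq), mul_zero, map_zero]
  | succ k ih =>
    intro hk q hq
    rw [apply_mul_eq_mul_apply_mul_add L (q.coeff k) _ _ (P k), hP.orthogonal (by lia), mul_zero,
      zero_add]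
    exact ih (by lia) _ (degree_sub_C_coeff_mul_lt hq (hP.isMonicOfDegree k))

theorem degree_lt_of_lt (hP : IsMonicOrthogonal L P) {k n : ℕ} (h : k < n) :
    (P k).degree < n := by
  have : Nontrivial R := nontrivial_of_ne _ _ (hP.apply_mul_self_ne_zero k)
  rw [degree_eq_natDegree (hP.isMonicOfDegree k).ne_zero, (hP.isMonicOfDegree k).natDegree_eq]
  exact_mod_cast h

theorem eq_zero_of_forall_apply_mul_eq_zero [NoZeroDivisors R] (hP : IsMonicOrthogonal L P)
    {n : ℕ} {p : R[X]} (hp : p.degree < n) (horth : ∀ q : R[X], q.degree < n → L (p * q) = 0) :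
    p = 0 := by
  induction n with
  | zero => exact degree_eq_bot.mp (Nat.WithBot.lt_zero_iff.mp hp)
  | succ n ih =>
    set a := p.coeff n
    have hlt : (p - C a * P n).degree < n := degree_sub_C_coeff_mul_lt hp (hP.isMonicOfDegree n)
    have ha : a * L (P n * P n) = 0 := calc
      a * L (P n * P n) = L (P n * p) := by
        rw [apply_mul_eq_mul_apply_mul_add L a _ p (P n), hP.apply_mul_eq_zero_of_degree_lt hlt,
          add_zero]
      _ = 0 := by
        rw [mul_comm]
        exact horth _ (hP.degree_lt_of_lt n.lt_succ_self)
    rw [(mul_eq_zero.mp ha).resolve_right (hP.apply_mul_self_ne_zero n), C_0, zero_mul,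
      sub_zero] at hlt
    exact ih hlt fun q hq => horth q (hq.trans (by exact_mod_cast n.lt_succ_self))

theorem eq_C_coeff_mul_of_forall_apply_mul_eq_zero [NoZeroDivisors R]
    (hP : IsMonicOrthogonal L P) {n : ℕ} {p : R[X]} (hp : p.degree < (n + 1 : ℕ))
    (horth : ∀ q : R[X], q.degree < n → L (p * q) = 0) : p = C (p.coeff n) * P n := by
  refine sub_eq_zero.mp (hP.eq_zero_of_forall_apply_mul_eq_zero
    (degree_sub_C_coeff_mul_lt hp (hP.isMonicOfDegree n)) fun q hq => ?_)
  rw [sub_mul, map_sub, horth q hq, mul_assoc, ← smul_eq_C_mul, map_smul,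
    hP.apply_mul_eq_zero_of_degree_lt hq, smul_zero, sub_zero]

theorem X_sub_C_mul_eq_sub {K : Type*} [Field K] {L : K[X] →ₗ[K] K} {P : ℕ → K[X]}
    (hP : IsMonicOrthogonal L P) {n : ℕ} {c : K} (hc : (P n).eval c ≠ 0) {q : K[X]}
    (hq : IsMonicOfDegree q n)
    (horth : ∀ r : K[X], r.degree < n → L ((X - C c) * (q * r)) = 0) :
    (X - C c) * q = P (n + 1) - C ((P (n + 1)).eval c / (P n).eval c) * P n := by
  set F := (X - C c) * q - P (n + 1) with hF
  have degree_F : F.degree < (n + 1 : ℕ) := by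
    refine degree_le_natDegree.trans_lt (Nat.cast_lt.mpr ?_)
    refine IsMonicOfDegree.natDegree_sub_lt n.succ_ne_zero ?_ (hP.isMonicOfDegree (n + 1))
    exact add_comm 1 n ▸ (isMonicOfDegree_X_sub_one c).mul hq
  have orthogonal_F (r : K[X]) (hr : r.degree < n) : L (F * r) = 0 := by
    have hr' : r.degree < (n + 1 : ℕ) := hr.trans (by exact_mod_cast n.lt_succ_self)
    rw [hF, sub_mul, mul_assoc, map_sub, horth r hr, hP.apply_mul_eq_zero_of_degree_lt hr',
      sub_zero]
  have F_eq := hP.eq_C_coeff_mul_of_forall_apply_mul_eq_zero degree_F orthogonal_F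
  have coeff_F : F.coeff n = -((P (n + 1)).eval c / (P n).eval c) := by
    have eval_F : -(P (n + 1)).eval c = F.coeff n * (P n).eval c := by
      simpa [hF] using congrArg (eval c) F_eq
    rw [← neg_div, eval_F, mul_div_cancel_right₀ _ hc]
  rw [coeff_F, C_neg] at F_eq
  linear_combination F_eq

end IsMonicOrthogonal

end Orthogonality

theorem stmt_11_general {K : Type*} [Field K] {u ut : ℕ → K} {c : K} {P Pt : ℕ → K[X]}
    (hP : IsMonicOrthogonal (momentFunctional K u) P) (hu0 : u 0 ≠ 0)
    (hc : ∀ n, (P n).eval c ≠ 0) (hut : ∀ n, ut n = u (n + 1) - c * u n)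
    (hPt : IsMonicOrthogonal (momentFunctional K ut) Pt) {D Dt : ℕ → K[X][X]}
    (hD : ∀ n, 1 ≤ n → IsDividedDifference (P n) (D n))
    (hDt : ∀ n, 1 ≤ n → IsDividedDifference (Pt n) (Dt n)) {R : ℕ → K[X]}
    (hR : ∀ n, R n = C (u 0 / ut 0) *
      ((X - C c) * ((u 0)⁻¹ • momentFunctional K[X] u (D (n + 1))) - P (n + 1))) (n : ℕ)
    (hn : 1 ≤ n) :
    (X - C c) * ((ut 0)⁻¹ • momentFunctional K[X] ut (Dt n)) =
      R n - C ((P (n + 1)).eval c / (P n).eval c) * R (n - 1) := by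
  set l := (P (n + 1)).eval c / (P n).eval c
  have connection : (X - C c) * Pt n = P (n + 1) - C l * P n := by
    refine hP.X_sub_C_mul_eq_sub (hc n) (hPt.isMonicOfDegree n) fun r hr => ?_
    exact (momentFunctional_christoffel hut _).symm.trans (hPt.apply_mul_eq_zero_of_degree_lt hr)
  have R_eq (m : ℕ) : R m = C (ut 0)⁻¹ *
      ((X - C c) * momentFunctional K[X] u (D (m + 1)) - u 0 • P (m + 1)) := by
    rw [hR, div_eq_inv_mul, C.map_mul, mul_assoc, ← smul_eq_C_mul (u 0), smul_sub, mul_smul_comm,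
      smul_smul, mul_inv_cancel₀ hu0, one_smul]
  have hDn := (hD (n + 1) n.succ_pos).sub ((hD n hn).C_mul l)
  rw [mul_smul_comm, (hDt n hn).X_sub_C_mul_momentFunctional hut hDn connection, R_eq, R_eq,
    Nat.sub_add_cancel hn, map_sub, momentFunctional_C_mul]
  simp only [smul_eq_C_mul]
  ring

/-- connection formula
`(x-c) P̃^{(1)}_{n-1}(x) = R_n(x) - (P_{n+1}(c)/P_n(c)) R_{n-1}(x)` for `n ≥ 1`, where
`R_n(x) = (u_0/ũ_0)[(x-c) P^{(1)}_n(x) - P_{n+1}(x)]` and the first-kind associated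
polynomials are defined by applying the functional to the second variable of the divided
difference: `(x - y) D_n = P_n(x) - P_n(y)`, `P^{(1)}_{n-1} = (1/u_0)⟨u_y, D_n⟩`. -/
theorem stmt_11 (u : ℕ → ℂ) (c : ℂ) (P : ℕ → Polynomial ℂ) (hP : IsSMOP u P)
    (hu0 : u 0 ≠ 0) (hc : ∀ n, (P n).eval c ≠ 0)
    (ut : ℕ → ℂ) (hut : ∀ n, ut n = u (n + 1) - c * u n) (hut0 : ut 0 ≠ 0)
    (Pt : ℕ → Polynomial ℂ) (hPt : IsSMOP ut Pt)
    (D : ℕ → Polynomial (Polynomial ℂ))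
    (hD : ∀ n, 1 ≤ n →
      (Polynomial.C Polynomial.X - Polynomial.X) * D n
        = Polynomial.C (P n) - (P n).map Polynomial.C)
    (Dt : ℕ → Polynomial (Polynomial ℂ))
    (hDt : ∀ n, 1 ≤ n →
      (Polynomial.C Polynomial.X - Polynomial.X) * Dt n
        = Polynomial.C (Pt n) - (Pt n).map Polynomial.C)
    (R : ℕ → Polynomial ℂ)
    (hR : ∀ n, R n = C (u 0 / ut 0)
      * ((X - C c) * ((u 0)⁻¹ • fapplyY u (D (n + 1))) - P (n + 1))) :
    ∀ n, 1 ≤ n →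
      (X - C c) * ((ut 0)⁻¹ • fapplyY ut (Dt n))
        = R n - C ((P (n + 1)).eval c / (P n).eval c) * R (n - 1) :=
  stmt_11_general hP.isMonicOrthogonal hu0 hc hut hPt.isMonicOrthogonal hD hDt hR
end
end
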